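/- With notation as above, (1/5)∑_{i=0}^{5} α_i^{12}·ψ_i(h − 26) = 4830·(h − 26), where the α_i are the six roots of w(α) = α^6 − 10α^5 + 35α^4 − 60α^3 + 55α^2 − hα + 5 over ℚ(h) and ψ_i denotes the substitution of α_i into ψ(h) − 26 with ψ(h) as above. In particular the eigenvalue is τ(5) = 4830, the Ramanujan tau value at 5. -/

import Mathlib

/-!
The claim is a statement about the power sums `p k = ∑ i, α i ^ k`. Comparing coefficients in
`hroots` gives the elementary symmetric functions `10, 35, 60, 55, h, 5` of the roots, Newton's
identities then give `p 1, …, p 5`, and `w (α i) = 0` gives the recurrence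
`p (k + 6) = 10 p (k + 5) - 35 p (k + 4) + 60 p (k + 3) - 55 p (k + 2) + h p (k + 1) - 5 p k`,
hence every `p k` as a polynomial in `h`. The sum on the left-hand side is a combination of
`p 12, …, p 17` with coefficients in `ℤ[h]`, and substituting the values leaves
`5 * 4830 (h - 26)`.
-/

open Polynomial

/-- The value of the explicit polynomial `ψ(h)` at `α = a`. -/
def stmt11.psiVal {F : Type*} [CommRing F] (h a : F) : F :=
  h ^ 5 - 10 * h ^ 4 - 1065 * h ^ 3 + 12690 * h ^ 2 + 168930 * h - 1462250
  + (-55 * h ^ 4 + 850 * h ^ 3 + 39575 * h ^ 2 - 608700 * h - 1113524) * a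
  + (60 * h ^ 4 - 775 * h ^ 3 - 45400 * h ^ 2 + 593900 * h + 2008800) * a ^ 2
  + (-35 * h ^ 4 + 400 * h ^ 3 + 27125 * h ^ 2 - 320900 * h - 1418300) * a ^ 3
  + (10 * h ^ 4 - 105 * h ^ 3 - 7850 * h ^ 2 + 86975 * h + 445850) * a ^ 4
  + (-h ^ 4 + 10 * h ^ 3 + 790 * h ^ 2 - 8440 * h - 46680) * a ^ 5

lemma stmt11.coeff_ext {F : Type*} [Field F] {a₁ a₂ a₃ a₄ a₅ a₆ b₁ b₂ b₃ b₄ b₅ b₆ : F}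
    (hab : X ^ 6 - C a₁ * X ^ 5 + C a₂ * X ^ 4 - C a₃ * X ^ 3 + C a₄ * X ^ 2 - C a₅ * X + C a₆
      = X ^ 6 - C b₁ * X ^ 5 + C b₂ * X ^ 4 - C b₃ * X ^ 3 + C b₄ * X ^ 2 - C b₅ * X + C b₆) :
    a₁ = b₁ ∧ a₂ = b₂ ∧ a₃ = b₃ ∧ a₄ = b₄ ∧ a₅ = b₅ := by
  have hc (n : ℕ) := congrArg (fun q : F[X] => q.coeff n) hab
  refine ⟨?_, ?_, ?_, ?_, ?_⟩
  · simpa [coeff_X, coeff_C] using hc 5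
  · simpa [coeff_X, coeff_C] using hc 4
  · simpa [coeff_X, coeff_C] using hc 3
  · simpa [coeff_X, coeff_C] using hc 2
  · simpa [coeff_X, coeff_C] using hc 1

/-- Newton's identities for the first five power sums of six elements, in terms of the coefficients
of the monic polynomial having these elements as roots. -/
lemma stmt11.newton {F : Type*} [Field F] (α : Fin 6 → F) (e₁ e₂ e₃ e₄ e₅ e₆ : F)
    (hroots : (∏ i : Fin 6, (X - C (α i)))
      = X ^ 6 - C e₁ * X ^ 5 + C e₂ * X ^ 4 - C e₃ * X ^ 3 + C e₄ * X ^ 2 - C e₅ * X + C e₆) :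
    ∑ i, α i = e₁ ∧
    ∑ i, α i ^ 2 = e₁ * ∑ i, α i - 2 * e₂ ∧
    ∑ i, α i ^ 3 = e₁ * ∑ i, α i ^ 2 - e₂ * ∑ i, α i + 3 * e₃ ∧
    ∑ i, α i ^ 4 = e₁ * ∑ i, α i ^ 3 - e₂ * ∑ i, α i ^ 2 + e₃ * ∑ i, α i - 4 * e₄ ∧
    ∑ i, α i ^ 5 = e₁ * ∑ i, α i ^ 4 - e₂ * ∑ i, α i ^ 3 + e₃ * ∑ i, α i ^ 2
      - e₄ * ∑ i, α i + 5 * e₅ := by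
  simp only [Fin.sum_univ_six, Fin.prod_univ_six] at hroots ⊢
  generalize α 0 = a, α 1 = b, α 2 = c, α 3 = d, α 4 = e, α 5 = f at *
  have expand : (X - C a) * (X - C b) * (X - C c) * (X - C d) * (X - C e) * (X - C f)
      = X ^ 6
        - C (a + b + c + d + e + f)
          * X ^ 5
        + C (a * b + a * c + a * d + a * e + a * f + b * c + b * d + b * e + b * f + c * d +
            c * e + c * f + d * e + d * f + e * f)
          * X ^ 4
        - C (a * b * c + a * b * d + a * b * e + a * b * f + a * c * d + a * c * e +
            a * c * f + a * d * e + a * d * f + a * e * f + b * c * d + b * c * e + b * c * f +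
            b * d * e + b * d * f + b * e * f + c * d * e + c * d * f + c * e * f + d * e * f)
          * X ^ 3
        + C (a * b * c * d + a * b * c * e + a * b * c * f + a * b * d * e + a * b * d * f +
            a * b * e * f + a * c * d * e + a * c * d * f + a * c * e * f + a * d * e * f +
            b * c * d * e + b * c * d * f + b * c * e * f + b * d * e * f + c * d * e * f)
          * X ^ 2
        - C (a * b * c * d * e + a * b * c * d * f + a * b * c * e * f + a * b * d * e * f +
            a * c * d * e * f + b * c * d * e * f)
          * X
        + C (a * b * c * d * e * f) := by
    simp only [C_add, C_mul]
    ring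
  rw [expand] at hroots
  obtain ⟨rfl, rfl, rfl, rfl, rfl⟩ := stmt11.coeff_ext hroots
  refine ⟨?_, ?_, ?_, ?_, ?_⟩ <;> ring

/-- If `α_0, …, α_5` are the six roots of
`w(α) = α^6 - 10α^5 + 35α^4 - 60α^3 + 55α^2 - hα + 5` in a field of characteristic zero,
then `(1/5) ∑_{i=0}^5 α_i^{12} (ψ_i(h) - 26) = 4830 (h - 26)`, with `τ(5) = 4830` the
Ramanujan tau value at `5`. -/
theorem stmt_11 {F : Type*} [Field F] [CharZero F] (h : F) (α : Fin 6 → F)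
    (hroots : (∏ i : Fin 6, (X - C (α i)))
      = X ^ 6 - 10 * X ^ 5 + 35 * X ^ 4 - 60 * X ^ 3 + 55 * X ^ 2 - C h * X + 5) :
    (1 / 5 : F) * ∑ i : Fin 6, (α i) ^ 12 * (stmt11.psiVal h (α i) - 26)
      = 4830 * (h - 26) := by
  obtain ⟨p1, p2, p3, p4, p5⟩ := stmt11.newton α 10 35 60 55 h 5 (by
    rw [hroots]; simp only [map_ofNat])
  have root (i : Fin 6) : α i ^ 6 = 10 * α i ^ 5 - 35 * α i ^ 4 + 60 * α i ^ 3 - 55 * α i ^ 2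
      + h * α i - 5 := by
    have key := congrArg (eval (α i)) hroots
    rw [eval_prod, Finset.prod_eq_zero (Finset.mem_univ i) (by simp)] at key
    simp at key
    linear_combination -key
  have p0 : ∑ i, α i ^ 0 = 6 := by simp
  have recur (k : ℕ) : ∑ i, α i ^ (k + 6) = 10 * ∑ i, α i ^ (k + 5) - 35 * ∑ i, α i ^ (k + 4)
      + 60 * ∑ i, α i ^ (k + 3) - 55 * ∑ i, α i ^ (k + 2) + h * ∑ i, α i ^ (k + 1)
      - 5 * ∑ i, α i ^ k := by
    simp only [Finset.mul_sum, ← Finset.sum_add_distrib, ← Finset.sum_sub_distrib]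
    refine Finset.sum_congr rfl fun i _ => ?_
    linear_combination α i ^ k * root i
  rw [p1] at p2 p3 p4 p5
  rw [p2] at p3 p4 p5
  rw [p3] at p4 p5
  rw [p4] at p5
  have p1' : ∑ i, α i ^ 1 = 10 := by simpa using p1
  have p6 : ∑ i, α i ^ 6 = 14070 + 60 * h := by
    rw [recur 0, p5, p4, p3, p2, p1', p0]; ring
  have p7 : ∑ i, α i ^ 7 = 66300 + 455 * h := by
    rw [recur 1, p6, p5, p4, p3, p2, p1']; ring
  have p8 : ∑ i, α i ^ 8 = 315750 + 2880 * h := by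
    rw [recur 2, p7, p6, p5, p4, p3, p2]; ring
  have p9 : ∑ i, α i ^ 9 = 1515550 + 16830 * h := by
    rw [recur 3, p8, p7, p6, p5, p4, p3]; ring
  have p10 : ∑ i, α i ^ 10 = 7305250 + 94500 * h + 5 * h ^ 2 := by
    rw [recur 4, p9, p8, p7, p6, p5, p4]; ring
  have p11 : ∑ i, α i ^ 11 = 35291750 + 517770 * h + 110 * h ^ 2 := by
    rw [recur 5, p10, p9, p8, p7, p6, p5]; ring
  have p12 : ∑ i, α i ^ 12 = 170730150 + 2787600 * h + 1380 * h ^ 2 := by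
    rw [recur 6, p11, p10, p9, p8, p7, p6]; ring
  have p13 : ∑ i, α i ^ 13 = 826718500 + 14811875 * h + 13130 * h ^ 2 := by
    rw [recur 7, p12, p11, p10, p9, p8, p7]; ring
  have p14 : ∑ i, α i ^ 14 = 4005767250 + 77922600 * h + 106155 * h ^ 2 := by
    rw [recur 8, p13, p12, p11, p10, p9, p8]; ring
  have p15 : ∑ i, α i ^ 15 = 19417710000 + 406810125 * h + 773250 * h ^ 2 + 5 * h ^ 3 := by
    rw [recur 9, p14, p13, p12, p11, p10, p9]; ring
  have p16 : ∑ i, α i ^ 16 = 94151671750 + 2111024000 * h + 5246720 * h ^ 2 + 160 * h ^ 3 := by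
    rw [recur 10, p15, p14, p13, p12, p11, p10]; ring
  have p17 : ∑ i, α i ^ 17 = 456596926250 + 10900729800 * h + 33837650 * h ^ 2 + 2805 * h ^ 3 := by
    rw [recur 11, p16, p15, p14, p13, p12, p11]; ring
  have expand : ∑ i, α i ^ 12 * (stmt11.psiVal h (α i) - 26)
      = (h ^ 5 - 10 * h ^ 4 - 1065 * h ^ 3 + 12690 * h ^ 2 + 168930 * h - 1462250 - 26) *
        ∑ i, α i ^ 12
        + (-55 * h ^ 4 + 850 * h ^ 3 + 39575 * h ^ 2 - 608700 * h - 1113524) * ∑ i, α i ^ 13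
        + (60 * h ^ 4 - 775 * h ^ 3 - 45400 * h ^ 2 + 593900 * h + 2008800) * ∑ i, α i ^ 14
        + (-35 * h ^ 4 + 400 * h ^ 3 + 27125 * h ^ 2 - 320900 * h - 1418300) * ∑ i, α i ^ 15
        + (10 * h ^ 4 - 105 * h ^ 3 - 7850 * h ^ 2 + 86975 * h + 445850) * ∑ i, α i ^ 16
        + (-h ^ 4 + 10 * h ^ 3 + 790 * h ^ 2 - 8440 * h - 46680) * ∑ i, α i ^ 17 := by
    simp only [Finset.mul_sum, ← Finset.sum_add_distrib]
    refine Finset.sum_congr rfl fun i _ => ?_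
    rw [stmt11.psiVal]
    ring
  rw [expand, p12, p13, p14, p15, p16, p17]
  ring
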